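/- Let k be a positive integer and let G be a finite connected simple graph with minimum degree δ(G), maximum degree Δ(G) ≥ k + 2, and order n(G). Then F_k(G) ≤ ((Δ(G) − k − 1)·n(G) + max{δ(G)·(k + 1 − Δ(G)) + k, k·(δ(G) − Δ(G) + 2)}) / (Δ(G) − 1). -/

import Mathlib

/-- One step of the `k`-forcing color change process: a colored vertex (in `S`)
with at most `k` non-colored neighbors causes all of its neighbors to become colored. -/
def kStep {V : Type*} [Fintype V] [DecidableEq V] (G : SimpleGraph V) [DecidableRel G.Adj]
    (k : ℕ) (S : Finset V) : Finset V :=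
  S ∪ Finset.univ.filter (fun v => ∃ u ∈ S, G.Adj u v ∧ (G.neighborFinset u \ S).card ≤ k)

/-- `S` is a `k`-forcing set if iterating the color change rule starting from `S`
eventually colors all vertices of `G`. -/
def IsKForcingSet {V : Type*} [Fintype V] [DecidableEq V] (G : SimpleGraph V)
    [DecidableRel G.Adj] (k : ℕ) (S : Finset V) : Prop :=
  ∃ n : ℕ, (kStep G k)^[n] S = Finset.univ

/-- The `k`-forcing number `F_k(G)`: the minimum cardinality of a `k`-forcing set. -/
noncomputable def kForcingNumber {V : Type*} [Fintype V] [DecidableEq V] (G : SimpleGraph V)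
    [DecidableRel G.Adj] (k : ℕ) : ℕ :=
  sInf {m | ∃ S : Finset V, S.card = m ∧ IsKForcingSet G k S}

theorem kStep_mono' {V : Type*} [Fintype V] [DecidableEq V] (G : SimpleGraph V)
    [DecidableRel G.Adj] (k : ℕ) : Monotone (kStep G k) := by
  intro S T h v hv
  simp only [kStep, Finset.mem_union, Finset.mem_filter, Finset.mem_univ, true_and] at hv ⊢
  rcases hv with hv | ⟨u, hu, ha, hc⟩
  · exact Or.inl (h hv)
  · exact Or.inr ⟨u, h hu, ha,
      (Finset.card_le_card (Finset.sdiff_subset_sdiff (Finset.Subset.refl _) h)).trans hc⟩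

theorem subset_kStep_iter {V : Type*} [Fintype V] [DecidableEq V] (G : SimpleGraph V)
    [DecidableRel G.Adj] (k : ℕ) (n : ℕ) (S : Finset V) : S ⊆ (kStep G k)^[n] S := by
  induction n with
  | zero => simp
  | succ n ih =>
    rw [Function.iterate_succ_apply']
    exact ih.trans Finset.subset_union_left

/-- The process started at `S` eventually colors all of `C`. -/
def ForcesK {V : Type*} [Fintype V] [DecidableEq V] (G : SimpleGraph V)
    [DecidableRel G.Adj] (k : ℕ) (S C : Finset V) : Prop :=
  ∃ n : ℕ, C ⊆ (kStep G k)^[n] S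

theorem ForcesK.union {V : Type*} [Fintype V] [DecidableEq V] {G : SimpleGraph V}
    [DecidableRel G.Adj] {k : ℕ} {S C : Finset V} (h : ForcesK G k S C) (A : Finset V) :
    ForcesK G k (S ∪ A) (C ∪ A) := by
  obtain ⟨n, hn⟩ := h
  refine ⟨n, Finset.union_subset ?_ ?_⟩
  · exact hn.trans ((kStep_mono' G k).iterate n Finset.subset_union_left)
  · exact Finset.subset_union_right.trans (subset_kStep_iter G k n (S ∪ A))

theorem ForcesK.step {V : Type*} [Fintype V] [DecidableEq V] {G : SimpleGraph V}
    [DecidableRel G.Adj] {k : ℕ} {S C : Finset V} (h : ForcesK G k S C) (u : V) (hu : u ∈ C)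
    (hc : (G.neighborFinset u \ C).card ≤ k) :
    ForcesK G k S (C ∪ G.neighborFinset u) := by
  obtain ⟨n, hn⟩ := h
  refine ⟨n + 1, ?_⟩
  rw [Function.iterate_succ_apply']
  refine Finset.union_subset (hn.trans Finset.subset_union_left) ?_
  intro v hv
  simp only [kStep, Finset.mem_union, Finset.mem_filter, Finset.mem_univ, true_and]
  exact Or.inr ⟨u, hn hu, by simpa using hv,
    (Finset.card_le_card (Finset.sdiff_subset_sdiff (Finset.Subset.refl _) hn)).trans hc⟩

/-- Color just enough neighbors of `u` so that `u` forces. -/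
theorem ForcesK.extend {V : Type*} [Fintype V] [DecidableEq V] {G : SimpleGraph V}
    [DecidableRel G.Adj] {k : ℕ} {S C : Finset V} (h : ForcesK G k S C) (u : V) (hu : u ∈ C) :
    ∃ S', S'.card ≤ S.card + ((G.neighborFinset u \ C).card - k) ∧
      ForcesK G k S' (C ∪ G.neighborFinset u) := by
  obtain ⟨A, hA, hAc⟩ := Finset.exists_subset_card_eq
    (Nat.sub_le (G.neighborFinset u \ C).card k)
  refine ⟨S ∪ A, (Finset.card_union_le _ _).trans (by omega), ?_⟩
  have h2 := (h.union A).step u (Finset.mem_union_left _ hu) (by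
    rw [← Finset.sup_eq_union, ← sdiff_sdiff_left, Finset.card_sdiff_of_subset hA]
    omega)
  obtain ⟨n, hn⟩ := h2
  refine ⟨n, subset_trans ?_ hn⟩
  exact Finset.union_subset_union Finset.subset_union_left (Finset.Subset.refl _)

theorem greedy_forcing {V : Type*} [Fintype V] [DecidableEq V]
    (G : SimpleGraph V) [DecidableRel G.Adj] (k a : ℕ) (hconn : G.Connected)
    (hΔ : G.maxDegree = a + k + 1) (m : ℕ) : ∀ S C : Finset V, C.Nonempty →
      Fintype.card V - C.card ≤ m → (∀ v ∈ C, ∃ w ∈ C, G.Adj v w) → ForcesK G k S C →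
      ∃ T, IsKForcingSet G k T ∧
        (a + k) * T.card + a * C.card ≤ (a + k) * S.card + a * Fintype.card V := by
  induction m with
  | zero =>
    intro S C hne hm hC hF
    obtain ⟨n, hn⟩ := hF
    have : C = Finset.univ := by
      rw [← Finset.card_eq_iff_eq_univ]
      have := Finset.card_le_univ C
      omega
    subst this
    exact ⟨S, ⟨n, Finset.univ_subset_iff.mp hn⟩, by simp⟩
  | succ m ih =>
    intro S C hne hm hC hF
    by_cases hU : C = Finset.univ
    · subst hU
      obtain ⟨n, hn⟩ := hF
      exact ⟨S, ⟨n, Finset.univ_subset_iff.mp hn⟩, by simp⟩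
    obtain ⟨x, hx⟩ := hne
    obtain ⟨y, hy⟩ : ∃ y, y ∉ C := by
      by_contra hcon
      push Not at hcon
      exact hU (Finset.eq_univ_iff_forall.mpr hcon)
    obtain ⟨p⟩ := hconn.preconnected x y
    obtain ⟨d, -, hd1, hd2⟩ := p.exists_boundary_dart (C : Set V) (by simpa using hx)
      (by simpa using hy)
    have hu : d.fst ∈ C := by simpa using hd1
    have hw : d.snd ∉ C := by simpa using hd2
    have hadj : G.Adj d.fst d.snd := d.adj
    generalize d.fst = u at *
    generalize d.snd = w at *
    obtain ⟨S', hS', hF'⟩ := hF.extend u hu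
    obtain ⟨z, hz, huz⟩ := hC u hu
    have hr : (G.neighborFinset u \ C).card ≤ a + k := by
      have h1 : (G.neighborFinset u \ C).card < (G.neighborFinset u).card := by
        apply Finset.card_lt_card
        refine ⟨Finset.sdiff_subset, fun hsub => ?_⟩
        have := hsub (show z ∈ G.neighborFinset u by simpa using huz)
        simp [hz] at this
      rw [G.card_neighborFinset_eq_degree] at h1
      have := G.degree_le_maxDegree u
      omega
    have hr0 : 0 < (G.neighborFinset u \ C).card :=
      Finset.card_pos.mpr ⟨w, by simp [hadj, hw]⟩
    have hcard : (C ∪ G.neighborFinset u).card = C.card + (G.neighborFinset u \ C).card := by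
      rw [← Finset.union_sdiff_self_eq_union, Finset.card_union_of_disjoint Finset.disjoint_sdiff]
    obtain ⟨T, hT, hTc⟩ := ih S' (C ∪ G.neighborFinset u) ⟨x, Finset.mem_union_left _ hx⟩
      (by omega) (by
        intro v hv
        rcases Finset.mem_union.mp hv with hv | hv
        · obtain ⟨q, hq, hvq⟩ := hC v hv
          exact ⟨q, Finset.mem_union_left _ hq, hvq⟩
        · refine ⟨u, Finset.mem_union_left _ hu, ?_⟩
          rw [SimpleGraph.mem_neighborFinset] at hv
          exact hv.symm) hF'
    refine ⟨T, hT, ?_⟩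
    rw [hcard] at hTc
    generalize (G.neighborFinset u \ C).card = r at *
    have hcost : (a + k) * (r - k) ≤ a * r := by
      rcases le_total r k with h | h
      · simp [Nat.sub_eq_zero_of_le h]
      · obtain ⟨e, rfl⟩ := Nat.exists_eq_add_of_le h
        have : e ≤ a := by omega
        simp only [Nat.add_sub_cancel_left]
        nlinarith
    have := Nat.mul_le_mul_left (a + k) hS'
    nlinarith

theorem kForcingNumber_le_main {V : Type*} [Fintype V] [DecidableEq V]
    (G : SimpleGraph V) [DecidableRel G.Adj] (k : ℕ) (hk : 1 ≤ k)
    (hconn : G.Connected) (hΔ : k + 2 ≤ G.maxDegree) :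
    (kForcingNumber G k : ℝ) ≤
      (((G.maxDegree : ℝ) - k - 1) * (Fintype.card V) +
        max ((G.minDegree : ℝ) * ((k : ℝ) + 1 - G.maxDegree) + k)
          ((k : ℝ) * ((G.minDegree : ℝ) - G.maxDegree + 2))) / ((G.maxDegree : ℝ) - 1) := by
  obtain ⟨a, ha⟩ : ∃ a, G.maxDegree = a + k + 1 := ⟨G.maxDegree - k - 1, by omega⟩
  have hne : Nonempty V := hconn.nonempty
  obtain ⟨v, hv⟩ := G.exists_minimal_degree_vertex
  have hnt : Nontrivial V := by
    rw [← Fintype.one_lt_card_iff_nontrivial]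
    have := G.maxDegree_lt_card_verts
    omega
  have hpos : 0 < G.degree v := hconn.preconnected.degree_pos_of_nontrivial v
  have hF0 : ForcesK G k {v} {v} := ⟨0, by simp⟩
  have hsd : G.neighborFinset v \ {v} = G.neighborFinset v := by
    rw [Finset.sdiff_singleton_eq_erase, Finset.erase_eq_of_notMem (by simp)]
  obtain ⟨S, hS, hF⟩ := hF0.extend v (by simp)
  rw [hsd, G.card_neighborFinset_eq_degree, Finset.card_singleton] at hS
  have hcard : ({v} ∪ G.neighborFinset v).card = 1 + G.degree v := by
    rw [Finset.card_union_of_disjoint (by simp), Finset.card_singleton,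
      G.card_neighborFinset_eq_degree]
  obtain ⟨T, hT, hTc⟩ := greedy_forcing G k a hconn ha _ S ({v} ∪ G.neighborFinset v)
    ⟨v, by simp⟩ le_rfl (by
      intro x hx
      rcases Finset.mem_union.mp hx with hx | hx
      · rw [Finset.mem_singleton] at hx
        subst hx
        obtain ⟨w, hw⟩ := (G.degree_pos_iff_exists_adj x).mp hpos
        exact ⟨w, by simp [hw], hw⟩
      · rw [SimpleGraph.mem_neighborFinset] at hx
        exact ⟨v, by simp, hx.symm⟩) hF
  have hle : kForcingNumber G k ≤ T.card := Nat.sInf_le ⟨T, rfl, hT⟩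
  rw [hcard, ← hv] at hTc
  rw [← hv] at hS
  have h1 : (a + k) * kForcingNumber G k + a * (1 + G.minDegree) ≤
      (a + k) * (1 + (G.minDegree - k)) + a * Fintype.card V := by
    have e1 := Nat.mul_le_mul_left (a + k) hle
    have e2 := Nat.mul_le_mul_left (a + k) hS
    omega
  have hakp : (0 : ℝ) < (a : ℝ) + k := by
    have : (1 : ℝ) ≤ k := by exact_mod_cast hk
    positivity
  have hD : (G.maxDegree : ℝ) = a + k + 1 := by rw [ha]; push_cast; ring
  rw [hD, le_div_iff₀ (by linarith)]
  rcases le_total G.minDegree k with h | h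
  · rw [Nat.sub_eq_zero_of_le h] at h1
    have h1' : ((a : ℝ) + k) * kForcingNumber G k + a * (1 + G.minDegree) ≤
      (a + k) * 1 + a * Fintype.card V := by exact_mod_cast h1
    have := le_max_left ((G.minDegree : ℝ) * ((k : ℝ) + 1 - (a + k + 1)) + k)
          ((k : ℝ) * ((G.minDegree : ℝ) - (a + k + 1) + 2))
    linarith
  · obtain ⟨e, he⟩ := Nat.exists_eq_add_of_le h
    rw [he, Nat.add_sub_cancel_left] at h1
    have h1' : ((a : ℝ) + k) * kForcingNumber G k + a * (1 + (k + e)) ≤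
      (a + k) * (1 + e) + a * Fintype.card V := by exact_mod_cast h1
    have := le_max_right ((G.minDegree : ℝ) * ((k : ℝ) + 1 - (a + k + 1)) + k)
          ((k : ℝ) * ((G.minDegree : ℝ) - (a + k + 1) + 2))
    have he' : (G.minDegree : ℝ) = k + e := by rw [he]; push_cast; ring
    rw [he'] at this ⊢
    linarith
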